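/- arXiv:2501.15312 — 2 statements merged into one kernel-verified Lean document; each statement's English description precedes it below -/
import Mathlib

section
/- For every ε > 0 there exists K₀ such that for every K ≥ K₀ and every real c with 0 < c ≤ (1−ε)·2^K·log 2 (log denoting the natural logarithm), the probability that the random K-SAT formula Φ_{n,⌊cn⌋} is satisfiable tends to 1 as n → ∞. (Together with the first-moment upper bound, this shows that the satisfiability threshold satisfies c_{K,SAT} = 2^K·log 2·(1+o_K(1)).) -/
open MeasureTheory Filter Topology

open scoped Classical in
/-- The uniform probability measure on a finite type: normalized counting measure. -/
noncomputable def uniformMeasure (α : Type*) [Fintype α] [MeasurableSpace α] :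
    Measure α :=
  (Fintype.card α : ENNReal)⁻¹ • Measure.count

/-- A sample of a random `K`-SAT formula with `n` variables and `m` clauses:
for each clause `j` and each of its `K` literal slots `k`, `(ω j k).1` is the
chosen variable index and `(ω j k).2` is the negation sign of that occurrence.
Under `uniformMeasure` these choices are uniform and independent. -/
abbrev KSatSpace (n m K : ℕ) := Fin m → Fin K → Fin n × Bool

/-- An assignment `σ : Fin n → Bool` satisfies the formula `ω` if every clause
contains a literal evaluating to true, i.e. some slot `k` with
`σ (ω j k).1 ≠ (ω j k).2`. -/
def Satisfies {n m K : ℕ} (σ : Fin n → Bool) (ω : KSatSpace n m K) : Prop :=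
  ∀ j : Fin m, ∃ k : Fin K, σ (ω j k).1 ≠ (ω j k).2

/-- A formula is satisfiable if some assignment satisfies it. -/
def IsSatisfiable {n m K : ℕ} (ω : KSatSpace n m K) : Prop :=
  ∃ σ : Fin n → Bool, Satisfies σ ω

/-!
The plain second moment method fails, because two satisfying assignments are correlated to first
order in their overlap. So each assignment is weighted by a product of clause weights that still
vanish on violated clauses, but have no Fourier coefficients of degrees `1` and `2` in the truth
values of the literals: a clause has weight `1 - T / T₁`, where `T` is the sum of the elementary
symmetric polynomials of degree at least `3` in the spins of its literals and
`T₁ = 2 ^ K (1 + o(1))` is its value when all of them are false. For the average weight `Z`, one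
finds `E Z = 1` and `E Z ^ 2 = E f(r) ^ m`, where `r` is the overlap of two independent uniform
assignments and `f(r) - 1` is of order `r ^ 3` at `0`. Below the threshold the Gaussian
fluctuations of `r` dominate for moderate `r`, and its entropy `log 2` does for `r` close to `1`,
so that Laplace's method gives `E Z ^ 2 → 1`. As `Z` is supported on the satisfiable formulas, the
Cauchy-Schwarz inequality finishes the proof.
-/

section FiniteExpectation

open Finset
open scoped BigOperators

lemma expect_pi_prod {ι R : Type*} {α : ι → Type*} [Fintype ι] [DecidableEq ι]
    [∀ i, Fintype (α i)] [Semifield R] [CharZero R] (f : ∀ i, α i → R) :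
    𝔼 y : ∀ i, α i, ∏ i, f i (y i) = ∏ i, 𝔼 a, f i a := by
  simp only [Fintype.expect_eq_sum_div_card, prod_div_distrib, Fintype.prod_sum,
    Fintype.card_pi, Nat.cast_prod]

lemma sq_expect_le_expect_sq_mul_dens {α : Type*} [Fintype α] {Z : α → ℝ} {s : Finset α}
    (hZ : ∀ a ∉ s, Z a = 0) : (𝔼 a, Z a) ^ 2 ≤ (𝔼 a, Z a ^ 2) * s.dens := by
  classical
  have hind : ∀ a, Z a * (if a ∈ s then 1 else 0) = Z a := fun a ↦ by
    by_cases ha : a ∈ s <;> simp [ha, hZ]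
  have hdens : 𝔼 a, (if a ∈ s then (1 : ℝ) else 0) ^ 2 = s.dens := by
    simp [Fintype.expect_eq_sum_div_card, nnratCast_dens]
  simpa only [hind, hdens] using
    expect_mul_sq_le_sq_mul_sq univ Z fun a ↦ if a ∈ s then (1 : ℝ) else 0

lemma uniformMeasure_coe_finset {α : Type*} [Fintype α] [MeasurableSpace α]
    [MeasurableSingletonClass α] (s : Finset α) :
    uniformMeasure α s = ENNReal.ofReal s.dens := by
  rcases isEmpty_or_nonempty α with _ | _
  · simp [Subsingleton.elim s ∅]
  · rw [uniformMeasure, Measure.smul_apply, Measure.count_apply_finset, smul_eq_mul,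
      nnratCast_dens, ENNReal.ofReal_div_of_pos (by exact_mod_cast Fintype.card_pos),
      ENNReal.ofReal_natCast, ENNReal.ofReal_natCast, mul_comm, div_eq_mul_inv]

end FiniteExpectation

section BinomialTail

open Finset

/-- The binomial expansion of `(1 + r) ^ K` truncated to the terms of degree at least `d`. -/
def binomTail (d K : ℕ) (r : ℝ) : ℝ :=
  ∑ j ∈ Ico d (K + 1), K.choose j * r ^ j

variable {d K : ℕ} {r : ℝ}

lemma binomTail_zero_right (hd : 0 < d) : binomTail d K 0 = 0 :=
  sum_eq_zero fun j hj ↦ by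
    rw [zero_pow (hd.trans_le (mem_Ico.1 hj).1).ne', mul_zero]

lemma binomTail_zero_left (r : ℝ) : binomTail 0 K r = (1 + r) ^ K := by
  simp [binomTail, add_comm 1 r, add_pow, mul_comm]

lemma binomTail_of_lt (h : K < d) : binomTail d K r = 0 := by
  rw [binomTail, Ico_eq_empty_of_le (Nat.succ_le_of_lt h), sum_empty]

lemma binomTail_eq_choose_mul_pow_add (d K : ℕ) (r : ℝ) :
    binomTail d K r = K.choose d * r ^ d + binomTail (d + 1) K r := by
  rcases le_or_gt d K with h | h
  · exact sum_eq_sum_Ico_succ_bot (Nat.lt_succ_of_le h) _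
  · rw [binomTail_of_lt h, binomTail_of_lt (h.trans d.lt_succ_self), Nat.choose_eq_zero_of_lt h,
      Nat.cast_zero, zero_mul, zero_add]

lemma sum_choose_succ_mul_pow_succ (d K : ℕ) (r : ℝ) :
    ∑ j ∈ Ico d (K + 1), (K.choose (j + 1) : ℝ) * r ^ (j + 1) = binomTail (d + 1) K r := by
  rw [sum_Ico_add' (fun j ↦ (K.choose j : ℝ) * r ^ j) d (K + 1) 1]
  rcases le_or_gt d K with h | h
  · rw [sum_Ico_succ_top (Nat.succ_le_succ h), Nat.choose_succ_self, Nat.cast_zero, zero_mul,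
      add_zero, binomTail]
  · rw [binomTail_of_lt (h.trans d.lt_succ_self), Ico_eq_empty_of_le (Nat.succ_le_succ h),
      sum_empty]

lemma binomTail_succ_succ (d K : ℕ) (r : ℝ) :
    binomTail (d + 1) (K + 1) r = (1 + r) * binomTail (d + 1) K r + K.choose d * r ^ (d + 1) :=
  calc binomTail (d + 1) (K + 1) r
      = ∑ j ∈ Ico d (K + 1), (r * (K.choose j * r ^ j) + K.choose (j + 1) * r ^ (j + 1)) := by
        rw [binomTail, ← sum_Ico_add' _ d (K + 1) 1]
        refine sum_congr rfl fun j _ ↦ ?_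
        rw [Nat.choose_succ_succ]
        push_cast
        ring
    _ = r * binomTail d K r + binomTail (d + 1) K r := by
        rw [sum_add_distrib, ← mul_sum, sum_choose_succ_mul_pow_succ]
        rfl
    _ = (1 + r) * binomTail (d + 1) K r + K.choose d * r ^ (d + 1) := by
        rw [binomTail_eq_choose_mul_pow_add d]
        ring

lemma binomTail_nonpos (hd : Odd d) (hr : r ∈ Set.Icc (-1) 0) : binomTail d K r ≤ 0 := by
  obtain ⟨e, rfl⟩ : ∃ e, d = e + 1 := Nat.exists_eq_succ_of_ne_zero hd.pos.ne'
  induction K with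
  | zero => simp [binomTail]
  | succ K ih =>
    rw [binomTail_succ_succ]
    exact add_nonpos (mul_nonpos_of_nonneg_of_nonpos (by linarith [hr.1]) ih)
      (mul_nonpos_of_nonneg_of_nonpos (Nat.cast_nonneg _) (hd.pow_nonpos hr.2))

lemma binomTail_le_add_one_pow (hr : 0 ≤ r) : binomTail d K r ≤ (1 + r) ^ K := by
  rw [← binomTail_zero_left]
  exact sum_le_sum_of_subset_of_nonneg (Ico_subset_Ico_left d.zero_le) fun _ _ _ ↦ by positivity

lemma binomTail_le_mul_pow (hr : 0 ≤ r) : binomTail d K r ≤ (K * r) ^ d * (1 + r) ^ K := by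
  induction K generalizing d with
  | zero => cases d <;> simp [binomTail]
  | succ K ih =>
    cases d with
    | zero => simp [binomTail_zero_left]
    | succ d =>
      have hchoose : (K.choose d : ℝ) ≤ K ^ d := by exact_mod_cast K.choose_le_pow d
      have hone : 1 ≤ (1 + r) ^ (K + 1) := one_le_pow₀ (by linarith)
      have hpow : (K : ℝ) ^ (d + 1) + K ^ d ≤ (K + 1) ^ (d + 1) := by
        calc (K : ℝ) ^ (d + 1) + K ^ d = (K : ℝ) ^ d * (K + 1) := by ring
          _ ≤ (K + 1) ^ d * (K + 1) := by gcongr; linarith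
          _ = (K + 1) ^ (d + 1) := by ring
      have hhead : (1 + r) * binomTail (d + 1) K r
          ≤ (1 + r) * ((K * r) ^ (d + 1) * (1 + r) ^ K) :=
        mul_le_mul_of_nonneg_left ih (by linarith)
      have hlast : K.choose d * r ^ (d + 1) ≤ K ^ d * r ^ (d + 1) * (1 + r) ^ (K + 1) :=
        (mul_le_mul_of_nonneg_right hchoose (by positivity)).trans
          (le_mul_of_one_le_right (by positivity) hone)
      calc binomTail (d + 1) (K + 1) r
          ≤ (1 + r) * ((K * r) ^ (d + 1) * (1 + r) ^ K)
              + K ^ d * r ^ (d + 1) * (1 + r) ^ (K + 1) := by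
            rw [binomTail_succ_succ]
            exact add_le_add hhead hlast
        _ = ((K : ℝ) ^ (d + 1) + K ^ d) * (r ^ (d + 1) * (1 + r) ^ (K + 1)) := by ring
        _ ≤ (K + 1) ^ (d + 1) * (r ^ (d + 1) * (1 + r) ^ (K + 1)) := by gcongr
        _ = ((K + 1 : ℕ) * r) ^ (d + 1) * (1 + r) ^ (K + 1) := by
            push_cast
            rw [mul_pow, mul_assoc]

lemma abs_binomTail_le (hr : |r| ≤ 1) : |binomTail d K r| ≤ binomTail d K 1 := by
  refine (abs_sum_le_sum_abs _ _).trans (sum_le_sum fun j _ ↦ ?_)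
  rw [abs_mul, abs_pow, Nat.abs_cast, one_pow]
  exact mul_le_mul_of_nonneg_left (pow_le_one₀ (abs_nonneg r) hr) (Nat.cast_nonneg _)

lemma one_le_binomTail_one (hd : d ≤ K) : 1 ≤ binomTail d K 1 := by
  have h := single_le_sum (f := fun j ↦ (K.choose j : ℝ) * 1 ^ j) (s := Ico d (K + 1))
    (fun _ _ ↦ by positivity) (mem_Ico.2 ⟨hd, K.lt_succ_self⟩)
  simpa [binomTail] using h

lemma tendsto_binomTail_one_div_two_pow (d : ℕ) :
    Tendsto (fun K : ℕ ↦ binomTail d K 1 / 2 ^ K) atTop (𝓝 1) := by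
  induction d with
  | zero => simp [binomTail_zero_left, one_add_one_eq_two]
  | succ d ih =>
    have hchoose : Tendsto (fun K : ℕ ↦ (K.choose d : ℝ) / 2 ^ K) atTop (𝓝 0) :=
      squeeze_zero (fun K ↦ by positivity)
        (fun K ↦ div_le_div_of_nonneg_right (by exact_mod_cast K.choose_le_pow d) (by positivity))
        (tendsto_pow_const_div_const_pow_of_one_lt d one_lt_two)
    have h := ih.sub hchoose
    rw [sub_zero] at h
    refine h.congr fun K ↦ ?_
    rw [binomTail_eq_choose_mul_pow_add d, one_pow, mul_one, ← sub_div, add_sub_cancel_left]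

end BinomialTail

section ClauseWeight

open Finset
open scoped BigOperators

/-- The sum of the elementary symmetric polynomials of degree at least `d` in the coordinates
of `x`. -/
def esymmTail {ι : Type*} [Fintype ι] (d : ℕ) (x : ι → ℝ) : ℝ :=
  ∑ S : Finset ι with d ≤ #S, ∏ k ∈ S, x k

/-- The weight given to a clause whose `k`-th literal has spin `x k`. If `d` is at most the number
of literals, it vanishes when all of them are false (all spins `1`); it has no Fourier coefficients
of degrees `1, …, d - 1`. -/
noncomputable def clauseWeight {ι : Type*} [Fintype ι] (d : ℕ) (x : ι → ℝ) : ℝ :=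
  1 - esymmTail d x / binomTail d (Fintype.card ι) 1

variable {ι α : Type*} [Fintype ι] [Fintype α] {d : ℕ} {f g : α → ℝ}

lemma sum_pow_card_eq_binomTail (d : ℕ) (r : ℝ) :
    ∑ S : Finset ι with d ≤ #S, r ^ #S = binomTail d (Fintype.card ι) r := by
  rw [sum_filter, ← powerset_univ, sum_powerset_apply_card fun j ↦ if d ≤ j then r ^ j else 0]
  simp only [card_univ, nsmul_eq_mul, mul_ite, mul_zero, ← sum_filter]
  refine sum_congr (ext fun j ↦ ?_) fun _ _ ↦ rfl
  simp only [mem_filter, mem_range, mem_Ico, and_comm]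

lemma clauseWeight_one (hd : d ≤ Fintype.card ι) : clauseWeight d (fun _ : ι ↦ 1) = 0 := by
  have hpos : 0 < binomTail d (Fintype.card ι) 1 := one_pos.trans_le (one_le_binomTail_one hd)
  simp only [clauseWeight, esymmTail, prod_const, sum_pow_card_eq_binomTail, div_self hpos.ne',
    sub_self]

variable [DecidableEq ι]

lemma expect_prod_comp [Nonempty α] (f : α → ℝ) (S : Finset ι) :
    𝔼 y : ι → α, ∏ k ∈ S, f (y k) = (𝔼 a, f a) ^ #S := by
  calc 𝔼 y : ι → α, ∏ k ∈ S, f (y k)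
      = 𝔼 y : ι → α, ∏ k, if k ∈ S then f (y k) else 1 := by
        simp only [prod_ite_mem, univ_inter]
    _ = ∏ k, 𝔼 a, if k ∈ S then f a else 1 :=
        expect_pi_prod fun k a ↦ if k ∈ S then f a else 1
    _ = ∏ k, if k ∈ S then 𝔼 a, f a else 1 :=
        prod_congr rfl fun k _ ↦ by split_ifs <;> simp
    _ = (𝔼 a, f a) ^ #S := by rw [prod_ite_mem, univ_inter, prod_const]

lemma expect_prod_comp_mul_prod_comp_of_ne (hf : 𝔼 a, f a = 0) (hg : 𝔼 a, g a = 0)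
    {S T : Finset ι} (hST : S ≠ T) :
    𝔼 y : ι → α, (∏ k ∈ S, f (y k)) * ∏ k ∈ T, g (y k) = 0 := by
  obtain ⟨k, hk⟩ : ∃ k, ¬(k ∈ S ↔ k ∈ T) := by
    simpa only [ne_eq, Finset.ext_iff, not_forall] using hST
  calc 𝔼 y : ι → α, (∏ k ∈ S, f (y k)) * ∏ k ∈ T, g (y k)
      = 𝔼 y : ι → α, ∏ k, (if k ∈ S then f (y k) else 1) * (if k ∈ T then g (y k) else 1) := by
        simp only [prod_mul_distrib, prod_ite_mem, univ_inter]
    _ = ∏ k, 𝔼 a, (if k ∈ S then f a else 1) * (if k ∈ T then g a else 1) :=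
        expect_pi_prod fun k a ↦ (if k ∈ S then f a else 1) * (if k ∈ T then g a else 1)
    _ = 0 := prod_eq_zero (mem_univ k) <| by
        by_cases hS : k ∈ S <;> by_cases hT : k ∈ T <;> simp_all

variable [Nonempty α]

lemma expect_esymmTail_comp (d : ℕ) (f : α → ℝ) :
    𝔼 y : ι → α, esymmTail d (fun k ↦ f (y k)) = binomTail d (Fintype.card ι) (𝔼 a, f a) := by
  simp only [esymmTail, expect_sum_comm, expect_prod_comp, sum_pow_card_eq_binomTail]

lemma expect_esymmTail_comp_mul (hf : 𝔼 a, f a = 0) (hg : 𝔼 a, g a = 0) :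
    𝔼 y : ι → α, esymmTail d (fun k ↦ f (y k)) * esymmTail d (fun k ↦ g (y k))
      = binomTail d (Fintype.card ι) (𝔼 a, f a * g a) := by
  simp only [esymmTail, sum_mul_sum, expect_sum_comm, ← sum_pow_card_eq_binomTail]
  refine sum_congr rfl fun S hS ↦ ?_
  rw [sum_eq_single_of_mem S hS fun T _ hTS ↦
    expect_prod_comp_mul_prod_comp_of_ne hf hg hTS.symm]
  simp only [← prod_mul_distrib, expect_prod_comp fun a ↦ f a * g a]

lemma expect_clauseWeight_comp (hd : 0 < d) (hf : 𝔼 a, f a = 0) :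
    𝔼 y : ι → α, clauseWeight d (fun k ↦ f (y k)) = 1 := by
  simp only [clauseWeight, expect_sub_distrib, ← expect_div, expect_esymmTail_comp, hf,
    binomTail_zero_right hd, Fintype.expect_const, zero_div, sub_zero]

lemma expect_clauseWeight_comp_mul (hd : 0 < d) (hf : 𝔼 a, f a = 0) (hg : 𝔼 a, g a = 0) :
    𝔼 y : ι → α, clauseWeight d (fun k ↦ f (y k)) * clauseWeight d (fun k ↦ g (y k))
      = 1 + binomTail d (Fintype.card ι) (𝔼 a, f a * g a)
          / binomTail d (Fintype.card ι) 1 ^ 2 := by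
  set N := binomTail d (Fintype.card ι) 1 with hN
  have hexpand : ∀ y : ι → α,
      clauseWeight d (fun k ↦ f (y k)) * clauseWeight d (fun k ↦ g (y k))
        = clauseWeight d (fun k ↦ f (y k)) - esymmTail d (fun k ↦ g (y k)) / N
          + esymmTail d (fun k ↦ f (y k)) * esymmTail d (fun k ↦ g (y k)) / N ^ 2 := fun y ↦ by
    simp only [clauseWeight, ← hN]
    ring
  simp only [hexpand, expect_add_distrib, expect_sub_distrib, ← expect_div,
    expect_clauseWeight_comp hd hf, expect_esymmTail_comp, expect_esymmTail_comp_mul hf hg, hg,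
    binomTail_zero_right hd, zero_div, sub_zero]

end ClauseWeight

section SecondMoment

open Finset
open scoped BigOperators

/-- The `±1` encoding of a Boolean. -/
def spin (b : Bool) : ℝ := if b then 1 else -1

/-- The spin of a literal under an assignment: `1` if the literal is false, `-1` if it is true. -/
def literalSpin {n : ℕ} (σ : Fin n → Bool) (p : Fin n × Bool) : ℝ := spin (σ p.1) * spin p.2

/-- The normalized overlap of two assignments, in `[-1, 1]`. -/
noncomputable def overlap {n : ℕ} (σ τ : Fin n → Bool) : ℝ := 𝔼 i, spin (σ i) * spin (τ i)

/-- The average over all assignments of the product of the clause weights. Only satisfying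
assignments contribute. -/
noncomputable def weightedCount {n m K : ℕ} (d : ℕ) (ω : KSatSpace n m K) : ℝ :=
  𝔼 σ : Fin n → Bool, ∏ j, clauseWeight d fun k ↦ literalSpin σ (ω j k)

variable {n m K d : ℕ}

lemma spin_mul_self (b : Bool) : spin b * spin b = 1 := by cases b <;> simp [spin]

lemma weightedCount_eq_zero (hd : d ≤ K) {ω : KSatSpace n m K} (hω : ¬IsSatisfiable ω) :
    weightedCount d ω = 0 := by
  refine expect_eq_zero fun σ _ ↦ ?_
  obtain ⟨j, hj⟩ : ∃ j, ∀ k, σ (ω j k).1 = (ω j k).2 := by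
    have hσ : ¬Satisfies σ ω := fun h ↦ hω ⟨σ, h⟩
    simpa only [Satisfies, not_forall, not_exists, ne_eq, not_not] using hσ
  have hfalse : ∀ k, literalSpin σ (ω j k) = 1 := fun k ↦ by
    rw [literalSpin, hj, spin_mul_self]
  refine prod_eq_zero (mem_univ j) ?_
  simp only [hfalse]
  exact clauseWeight_one (by rwa [Fintype.card_fin])

lemma expect_literalSpin (σ : Fin n → Bool) : 𝔼 p, literalSpin σ p = 0 := by
  simp [Fintype.expect_eq_sum_div_card, literalSpin, Fintype.sum_prod_type, spin]

lemma expect_literalSpin_mul (σ τ : Fin n → Bool) :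
    𝔼 p, literalSpin σ p * literalSpin τ p = overlap σ τ := by
  have hneg : ∀ p : Fin n × Bool,
      literalSpin σ p * literalSpin τ p = spin (σ p.1) * spin (τ p.1) := fun p ↦ by
    rw [literalSpin, literalSpin, mul_mul_mul_comm, spin_mul_self, mul_one]
  simp only [hneg, overlap, ← univ_product_univ, expect_product, Fintype.expect_const]

lemma overlap_eq_two_mul_card_div_sub_one [NeZero n] (σ τ : Fin n → Bool) :
    overlap σ τ = 2 * #{i | τ i = σ i} / n - 1 := by
  have hspin : ∀ i, spin (σ i) * spin (τ i) = 2 * (if τ i = σ i then 1 else 0) - 1 := fun i ↦ by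
    cases σ i <;> cases τ i <;> norm_num [spin]
  simp only [overlap, hspin, expect_sub_distrib, ← mul_expect, Fintype.expect_const]
  rw [Fintype.expect_eq_sum_div_card, sum_boole, Fintype.card_fin, mul_div_assoc]

lemma expect_overlap [NeZero n] (σ : Fin n → Bool) (F : ℝ → ℝ) :
    𝔼 τ, F (overlap σ τ)
      = ∑ a ∈ range (n + 1), (n.choose a : ℝ) / 2 ^ n * F (2 * a / n - 1) := by
  have hpowerset : ∑ S : Finset (Fin n), F (2 * #S / n - 1)
      = ∑ a ∈ range (n + 1), n.choose a * F (2 * a / n - 1) := by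
    simpa only [powerset_univ, card_univ, Fintype.card_fin, nsmul_eq_mul] using
      sum_powerset_apply_card (fun a : ℕ ↦ F (2 * a / n - 1)) (x := (univ : Finset (Fin n)))
  have hagree : ∑ τ, F (overlap σ τ) = ∑ S : Finset (Fin n), F (2 * #S / n - 1) := by
    refine sum_nbij' (fun τ ↦ ({i | τ i = σ i} : Finset (Fin n)))
      (fun S i ↦ if i ∈ S then σ i else !(σ i))
      (by simp) (by simp) (fun τ _ ↦ ?_) (fun S _ ↦ ?_)
      fun τ _ ↦ by rw [overlap_eq_two_mul_card_div_sub_one]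
    · ext i
      cases hτ : τ i <;> cases hσ : σ i <;> simp [hτ, hσ]
    · ext i
      by_cases hi : i ∈ S <;> simp [hi]
  rw [Fintype.expect_eq_sum_div_card, hagree, hpowerset, sum_div]
  refine sum_congr rfl fun a _ ↦ ?_
  rw [div_mul_eq_mul_div]
  simp

lemma expect_weightedCount [NeZero n] (hd : 0 < d) :
    𝔼 ω : KSatSpace n m K, weightedCount d ω = 1 := by
  have hσ : ∀ σ : Fin n → Bool, 𝔼 ω : KSatSpace n m K,
      ∏ j, clauseWeight d (fun k ↦ literalSpin σ (ω j k)) = 1 := fun σ ↦ by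
    rw [expect_pi_prod fun _ (y : Fin K → Fin n × Bool) ↦
      clauseWeight d fun k ↦ literalSpin σ (y k)]
    simp only [expect_clauseWeight_comp hd (expect_literalSpin σ), prod_const_one]
  simp only [weightedCount]
  rw [expect_comm]
  simp only [hσ, Fintype.expect_const]

lemma expect_weightedCount_sq [NeZero n] (hd : 0 < d) :
    𝔼 ω : KSatSpace n m K, weightedCount d ω ^ 2
      = ∑ a ∈ range (n + 1), (n.choose a : ℝ) / 2 ^ n *
          (1 + binomTail d K (2 * a / n - 1) / binomTail d K 1 ^ 2) ^ m := by
  set G : ℝ → ℝ := fun r ↦ (1 + binomTail d K r / binomTail d K 1 ^ 2) ^ m with hG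
  have hpair : ∀ σ τ : Fin n → Bool, 𝔼 ω : KSatSpace n m K,
      (∏ j, clauseWeight d fun k ↦ literalSpin σ (ω j k)) *
        (∏ j, clauseWeight d fun k ↦ literalSpin τ (ω j k)) = G (overlap σ τ) := fun σ τ ↦ by
    simp only [← prod_mul_distrib]
    rw [expect_pi_prod fun _ (y : Fin K → Fin n × Bool) ↦
      (clauseWeight d fun k ↦ literalSpin σ (y k)) * clauseWeight d fun k ↦ literalSpin τ (y k)]
    simp only [expect_clauseWeight_comp_mul hd (expect_literalSpin σ) (expect_literalSpin τ),
      expect_literalSpin_mul, prod_const, card_univ, Fintype.card_fin, hG]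
  calc 𝔼 ω : KSatSpace n m K, weightedCount d ω ^ 2
      = 𝔼 σ : Fin n → Bool, 𝔼 τ : Fin n → Bool, G (overlap σ τ) := by
        simp only [weightedCount, sq, expect_mul_expect]
        rw [expect_comm]
        refine expect_congr rfl fun σ _ ↦ ?_
        rw [expect_comm]
        exact expect_congr rfl fun τ _ ↦ hpair σ τ
    _ = ∑ a ∈ range (n + 1), (n.choose a : ℝ) / 2 ^ n * G (2 * a / n - 1) := by
        rw [expect_congr rfl fun σ _ ↦ expect_overlap σ G, Fintype.expect_const]

end SecondMoment

section BinomialCoefficients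

open Finset Real

lemma choose_mul_pow_mul_pow_le_add_pow {R : Type*} [CommSemiring R] [PartialOrder R]
    [IsOrderedRing R] {u v : R} (hu : 0 ≤ u) (hv : 0 ≤ v) {n a : ℕ} (ha : a ≤ n) :
    n.choose a * (u ^ a * v ^ (n - a)) ≤ (u + v) ^ n := by
  rw [add_pow, mul_comm]
  exact single_le_sum (f := fun j ↦ u ^ j * v ^ (n - j) * (n.choose j : R))
    (fun j _ ↦ by positivity) (mem_range.2 (Nat.lt_succ_of_le ha))

-- Chernoff's bound: exponential tilting by `r` together with `cosh r ≤ exp (r ^ 2 / 2)`.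
lemma choose_div_two_pow_le_exp {n a : ℕ} (ha : a ≤ n) {r : ℝ} (hr : 2 * a = n * (1 + r)) :
    n.choose a / 2 ^ n ≤ exp (-(n * r ^ 2 / 2)) := by
  have htilt : exp r ^ a * exp (-r) ^ (n - a) = exp (n * r ^ 2) := by
    rw [← exp_nat_mul, ← exp_nat_mul, ← exp_add, Nat.cast_sub ha]
    congr 1
    linear_combination r * hr
  have hcosh : (exp r + exp (-r)) ^ n ≤ 2 ^ n * exp (n * (r ^ 2 / 2)) := by
    rw [show exp r + exp (-r) = 2 * cosh r by rw [cosh_eq]; ring, mul_pow, exp_nat_mul]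
    gcongr
    exact cosh_le_exp_half_sq r
  have hbinom : n.choose a * exp (n * r ^ 2) ≤ 2 ^ n * exp (n * (r ^ 2 / 2)) := by
    rw [← htilt]
    exact (choose_mul_pow_mul_pow_le_add_pow (exp_pos r).le (exp_pos (-r)).le ha).trans hcosh
  rw [div_le_iff₀ (by positivity)]
  calc (n.choose a : ℝ) = n.choose a * exp (n * r ^ 2) * exp (-(n * r ^ 2)) := by
        rw [mul_assoc, ← exp_add, add_neg_cancel, exp_zero, mul_one]
    _ ≤ 2 ^ n * exp (n * (r ^ 2 / 2)) * exp (-(n * r ^ 2)) :=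
        mul_le_mul_of_nonneg_right hbinom (exp_pos _).le
    _ = exp (-(n * r ^ 2 / 2)) * 2 ^ n := by
        rw [mul_assoc, ← exp_add, mul_comm]
        congr 2
        ring

lemma choose_le_exp_mul_add_negMulLog {n a : ℕ} (ha : a ≤ n) {x : ℝ} (hx0 : 0 < x) (hx1 : x ≤ 1)
    (hax : n - a ≤ x * n) : n.choose a ≤ exp (n * (x + negMulLog x)) := by
  have hbinom : n.choose a * x ^ (n - a) ≤ exp (n * x) := by
    calc n.choose a * x ^ (n - a) ≤ (1 + x) ^ n := by
          simpa only [one_pow, one_mul] using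
            choose_mul_pow_mul_pow_le_add_pow zero_le_one hx0.le ha
      _ ≤ exp x ^ n := by
          gcongr
          linarith [add_one_le_exp x]
      _ = exp (n * x) := (exp_nat_mul x n).symm
  have hpow : exp (-(n * negMulLog x)) ≤ x ^ (n - a) := by
    rw [← exp_log (pow_pos hx0 _), log_pow, Nat.cast_sub ha, negMulLog, exp_le_exp]
    linarith [mul_le_mul_of_nonpos_right hax (log_nonpos hx0.le hx1)]
  calc (n.choose a : ℝ)
      = n.choose a * exp (-(n * negMulLog x)) * exp (n * negMulLog x) := by
        rw [mul_assoc, ← exp_add, neg_add_cancel, exp_zero, mul_one]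
    _ ≤ exp (n * x) * exp (n * negMulLog x) :=
        mul_le_mul_of_nonneg_right
          ((mul_le_mul_of_nonneg_left hpow (Nat.cast_nonneg _)).trans hbinom) (exp_pos _).le
    _ = exp (n * (x + negMulLog x)) := by rw [← exp_add, mul_add]

lemma exists_add_negMulLog_le {η : ℝ} (hη : 0 < η) :
    ∃ x ∈ Set.Ioo (0 : ℝ) 1, x + negMulLog x ≤ η := by
  have hlim : Tendsto (fun x ↦ x + negMulLog x) (𝓝[>] 0) (𝓝 0) := by
    have hcont : Continuous fun x ↦ x + negMulLog x := by fun_prop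
    simpa using (hcont.tendsto 0).mono_left nhdsWithin_le_nhds
  exact ((eventually_mem_set.2 (Ioo_mem_nhdsGT one_pos)).and
    (hlim.eventually_le_const hη)).exists

end BinomialCoefficients

section Laplace

open Finset Real

variable {n : ℕ} {φ : ℝ → ℝ} {r t x y δ η : ℝ}

lemma choose_div_two_pow_mul_exp_le_of_le_sq_div_four {a : ℕ} (ha : a ≤ n)
    (har : 2 * a = n * (1 + r)) (ht : 0 ≤ t) (htr : t ≤ r) (hy : y ≤ r ^ 2 / 4) :
    n.choose a / 2 ^ n * exp (n * y) ≤ exp (-(n * t ^ 2 / 4)) :=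
  calc n.choose a / 2 ^ n * exp (n * y)
      ≤ exp (-(n * r ^ 2 / 2)) * exp (n * (r ^ 2 / 4)) := by
        gcongr
        exact choose_div_two_pow_le_exp ha har
    _ = exp (-(n * r ^ 2 / 4)) := by
        rw [← exp_add]
        congr 1
        ring
    _ ≤ exp (-(n * t ^ 2 / 4)) := by gcongr

lemma choose_div_two_pow_mul_exp_le_of_le_log_two_sub {a : ℕ} (ha : a ≤ n)
    (hx : x ∈ Set.Ioo 0 1) (hxη : x + negMulLog x ≤ η) (hax : n - a ≤ x * n)
    (hy : y ≤ log 2 - 2 * η) :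
    n.choose a / 2 ^ n * exp (n * y) ≤ exp (-(n * η)) :=
  calc n.choose a / 2 ^ n * exp (n * y)
      ≤ exp (n * η) / exp (n * log 2) * exp (n * (log 2 - 2 * η)) := by
        rw [exp_nat_mul (log 2), exp_log two_pos]
        gcongr
        exact (choose_le_exp_mul_add_negMulLog ha hx.1 hx.2.le hax).trans (by gcongr)
    _ = exp (-(n * η)) := by
        rw [← exp_sub, ← exp_add]
        congr 1
        ring

lemma two_mul_div_sub_one_mem_Icc {a : ℕ} (ha : a ≤ n) :
    2 * (a : ℝ) / n - 1 ∈ Set.Icc (-1) 1 := by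
  have hle : (a : ℝ) / n ≤ 1 := div_le_one_of_le₀ (by exact_mod_cast ha) n.cast_nonneg
  have hnonneg : 0 ≤ (a : ℝ) / n := by positivity
  rw [mul_div_assoc]
  constructor <;> linarith

lemma choose_div_two_pow_mul_exp_le (hn : 0 < n) {a : ℕ} (ha : a ≤ n) (hr : r = 2 * a / n - 1)
    (ht : 0 ≤ t) (hx : x ∈ Set.Ioo 0 1) (hxη : x + negMulLog x ≤ η)
    (hsmall : ∀ r ∈ Set.Icc (-1) 1, r ≤ t → φ r ≤ δ)
    (hmiddle : ∀ r ∈ Set.Ioc t (1 - 2 * x), φ r ≤ r ^ 2 / 4)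
    (hlarge : ∀ r ∈ Set.Ioc (1 - 2 * x) 1, φ r ≤ log 2 - 2 * η) :
    n.choose a / 2 ^ n * exp (n * φ r)
      ≤ n.choose a / 2 ^ n * exp (n * δ) + (exp (-(n * t ^ 2 / 4)) + exp (-(n * η))) := by
  have hr_mem : r ∈ Set.Icc (-1) 1 := hr ▸ two_mul_div_sub_one_mem_Icc ha
  have har : 2 * a = n * (1 + r) := by
    rw [hr]
    field_simp
    ring
  rcases le_or_gt r t with hrt | hrt
  · exact le_add_of_le_of_nonneg (by gcongr; exact hsmall r hr_mem hrt) (by positivity)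
  refine le_add_of_nonneg_of_le (by positivity) ?_
  rcases le_or_gt r (1 - 2 * x) with hrx | hrx
  · exact le_add_of_le_of_nonneg (choose_div_two_pow_mul_exp_le_of_le_sq_div_four ha har ht
      hrt.le (hmiddle r ⟨hrt, hrx⟩)) (exp_pos _).le
  · have hax : n - a ≤ x * n := by
      linarith [mul_le_mul_of_nonneg_left hrx.le (n.cast_nonneg (α := ℝ))]
    exact le_add_of_nonneg_of_le (exp_pos _).le
      (choose_div_two_pow_mul_exp_le_of_le_log_two_sub ha hx hxη hax (hlarge r ⟨hrx, hr_mem.2⟩))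

-- Laplace's method: the Gaussian decay of the binomial weights beats `φ` away from `r = 0`.
lemma sum_choose_div_two_pow_mul_exp_le (hn : 0 < n) (ht : 0 ≤ t) (hx : x ∈ Set.Ioo 0 1)
    (hxη : x + negMulLog x ≤ η) (hsmall : ∀ r ∈ Set.Icc (-1) 1, r ≤ t → φ r ≤ δ)
    (hmiddle : ∀ r ∈ Set.Ioc t (1 - 2 * x), φ r ≤ r ^ 2 / 4)
    (hlarge : ∀ r ∈ Set.Ioc (1 - 2 * x) 1, φ r ≤ log 2 - 2 * η) :
    ∑ a ∈ range (n + 1), n.choose a / 2 ^ n * exp (n * φ (2 * a / n - 1))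
      ≤ exp (n * δ) + (n + 1) * (exp (-(n * t ^ 2 / 4)) + exp (-(n * η))) := by
  have hone : ∑ a ∈ range (n + 1), (n.choose a : ℝ) / 2 ^ n = 1 := by
    rw [← sum_div, div_eq_one_iff_eq (by positivity)]
    exact_mod_cast Nat.sum_range_choose n
  refine (sum_le_sum fun a ha ↦ choose_div_two_pow_mul_exp_le hn (mem_range_succ_iff.1 ha)
    rfl ht hx hxη hsmall hmiddle hlarge).trans_eq ?_
  rw [sum_add_distrib, ← sum_mul, hone, one_mul, sum_const, card_range, nsmul_eq_mul]
  push_cast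
  rfl

lemma exists_tendsto_laplace_bound (C : ℝ) (hη : 0 < η) :
    ∃ t : ℕ → ℝ, (∀ n, 0 ≤ t n) ∧ Tendsto (fun n : ℕ ↦ exp (n * (C * t n ^ 3))
      + (n + 1) * (exp (-(n * t n ^ 2 / 4)) + exp (-(n * η)))) atTop (𝓝 1) := by
  -- With `s = n ^ (1 / 5)` and `t = s⁻²`, `n * t ^ 3 = s⁻¹` vanishes while `n * t ^ 2 = s` grows.
  set s : ℕ → ℝ := fun n ↦ (n : ℝ) ^ (1 / 5 : ℝ) with hs
  have hs5 : ∀ n : ℕ, (n : ℝ) = s n ^ 5 := fun n ↦ by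
    rw [hs, ← rpow_mul_natCast n.cast_nonneg]
    norm_num
  have hs_top : Tendsto s atTop atTop :=
    (tendsto_rpow_atTop (by norm_num)).comp tendsto_natCast_atTop_atTop
  have hpoly : ∀ (p : ℕ) (b : ℝ), 0 < b →
      Tendsto (fun y : ℝ ↦ (y ^ p + 1) * exp (-(b * y))) atTop (𝓝 0) := fun p b hb ↦ by
    simpa [add_mul, rpow_natCast] using
      (tendsto_rpow_mul_exp_neg_mul_atTop_nhds_zero p b hb).add
        (tendsto_rpow_mul_exp_neg_mul_atTop_nhds_zero 0 b hb)
  have hcentral : Tendsto (fun n ↦ exp (C / s n)) atTop (𝓝 1) := by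
    simpa only [exp_zero, Function.comp_def] using
      (continuous_exp.tendsto 0).comp (hs_top.const_div_atTop C)
  have hgauss : Tendsto (fun n : ℕ ↦ ((n : ℝ) + 1) * exp (-(1 / 4 * s n))) atTop (𝓝 0) :=
    ((hpoly 5 (1 / 4) (by norm_num)).comp hs_top).congr fun n ↦ by
      rw [Function.comp_apply, ← hs5]
  have hentropy : Tendsto (fun n : ℕ ↦ ((n : ℝ) + 1) * exp (-(n * η))) atTop (𝓝 0) :=
    ((hpoly 1 η hη).comp tendsto_natCast_atTop_atTop).congr fun n ↦ by
      rw [Function.comp_apply, pow_one, mul_comm η]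
  refine ⟨fun n ↦ (s n ^ 2)⁻¹, fun n ↦ by positivity, ?_⟩
  have hlim := hcentral.add (hgauss.add hentropy)
  rw [add_zero, add_zero] at hlim
  refine hlim.congr' ?_
  filter_upwards [hs_top.eventually_gt_atTop 0] with n hn
  have hsmall : n * (C * (s n ^ 2)⁻¹ ^ 3) = C / s n := by
    rw [hs5]
    field_simp
  have hlarge : n * (s n ^ 2)⁻¹ ^ 2 / 4 = 1 / 4 * s n := by
    rw [hs5]
    field_simp
  rw [mul_add, hsmall, hlarge]

end Laplace

section Threshold

open Finset Real
open scoped BigOperators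

variable {n m d K : ℕ} {ρ x η t r : ℝ}

lemma one_add_div_sq_pow_le_exp (hd : d ≤ K) (hr : |r| ≤ 1) :
    (1 + binomTail d K r / binomTail d K 1 ^ 2) ^ m
      ≤ exp (m * (binomTail d K r / binomTail d K 1 ^ 2)) := by
  have hone := one_le_binomTail_one hd
  have hbound : -1 ≤ binomTail d K r / binomTail d K 1 ^ 2 := by
    rw [le_div_iff₀ (by positivity)]
    nlinarith [neg_le_of_abs_le (abs_binomTail_le (d := d) (K := K) hr)]
  rw [exp_nat_mul]
  refine pow_le_pow_left₀ (by linarith) ?_ m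
  linarith [add_one_le_exp (binomTail d K r / binomTail d K 1 ^ 2)]

lemma binomTail_le_two_pow (hd : Odd d) (hr : r ∈ Set.Icc (-1) 1) : binomTail d K r ≤ 2 ^ K := by
  rcases le_total r 0 with hr0 | hr0
  · exact (binomTail_nonpos hd ⟨hr.1, hr0⟩).trans (by positivity)
  · exact (binomTail_le_add_one_pow hr0).trans (by gcongr; linarith [hr.2])

lemma mul_binomTail_le_mul_pow (hd : Odd d) (hρ : 0 ≤ ρ) (hρK : ρ * 2 ^ K ≤ 1)
    (hr : r ∈ Set.Icc (-1) 1) (ht : 0 ≤ t) (hrt : r ≤ t) :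
    ρ * binomTail d K r ≤ (K * t) ^ d := by
  rcases le_total r 0 with hr0 | hr0
  · exact (mul_nonpos_of_nonneg_of_nonpos hρ (binomTail_nonpos hd ⟨hr.1, hr0⟩)).trans
      (by positivity)
  · calc ρ * binomTail d K r ≤ ρ * ((K * t) ^ d * 2 ^ K) := by
          gcongr
          refine (binomTail_le_mul_pow hr0).trans ?_
          gcongr
          linarith [hr.2]
      _ = (K * t) ^ d * (ρ * 2 ^ K) := by ring
      _ ≤ (K * t) ^ d := mul_le_of_le_one_right (by positivity) hρK

lemma mul_binomTail_three_le_sq_div_four (hρ : 0 ≤ ρ) (hρK : ρ * 2 ^ K ≤ 1) (hx : 0 ≤ x)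
    (hxK : K ^ 3 * (1 - x) ^ K ≤ 1 / 4) (hr : r ∈ Set.Icc 0 (1 - 2 * x)) :
    ρ * binomTail 3 K r ≤ r ^ 2 / 4 := by
  obtain ⟨hr0, hrx⟩ := hr
  have hx1 : 0 ≤ 1 - x := by linarith
  calc ρ * binomTail 3 K r ≤ ρ * ((K * r) ^ 3 * (2 * (1 - x)) ^ K) := by
        gcongr
        refine (binomTail_le_mul_pow hr0).trans ?_
        gcongr
        linarith
    _ = ρ * 2 ^ K * (K ^ 3 * (1 - x) ^ K) * (r * r ^ 2) := by
        rw [mul_pow, mul_pow]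
        ring
    _ ≤ 1 * (1 / 4) * (1 * r ^ 2) := by
        gcongr
        linarith
    _ = r ^ 2 / 4 := by ring

lemma expect_weightedCount_three_sq_le [NeZero n] (hK : 3 ≤ K) (hη : 0 < η)
    (hx : x ∈ Set.Ioo 0 1) (hxη : x + negMulLog x ≤ η) (hxK : K ^ 3 * (1 - x) ^ K ≤ 1 / 4)
    (ht : 0 ≤ t) (hm : m * 2 ^ K ≤ (log 2 - 2 * η) * binomTail 3 K 1 ^ 2 * n) :
    𝔼 ω : KSatSpace n m K, weightedCount 3 ω ^ 2
      ≤ exp (n * (K ^ 3 * t ^ 3)) + (n + 1) * (exp (-(n * t ^ 2 / 4)) + exp (-(n * η))) := by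
  have hn : 0 < n := NeZero.pos n
  have hone : 0 < binomTail 3 K 1 := one_pos.trans_le (one_le_binomTail_one hK)
  set ρ : ℝ := m / (n * binomTail 3 K 1 ^ 2) with hρ_def
  have hρ : 0 ≤ ρ := by positivity
  have hρη : ρ * 2 ^ K ≤ log 2 - 2 * η := by
    rw [hρ_def, div_mul_eq_mul_div, div_le_iff₀ (by positivity)]
    linarith
  have hρK : ρ * 2 ^ K ≤ 1 := by linarith [log_two_lt_d9]
  have hexp : ∀ r, n * (ρ * binomTail 3 K r) = m * (binomTail 3 K r / binomTail 3 K 1 ^ 2) :=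
    fun r ↦ by
      rw [hρ_def]
      field_simp
  rw [expect_weightedCount_sq three_pos]
  refine (sum_le_sum fun a ha ↦ ?_).trans (sum_choose_div_two_pow_mul_exp_le
    (φ := fun r ↦ ρ * binomTail 3 K r) hn ht hx hxη
    (fun r hr hrt ↦ (mul_binomTail_le_mul_pow (by decide) hρ hρK hr ht hrt).trans_eq
      (mul_pow _ _ _))
    (fun r hr ↦ mul_binomTail_three_le_sq_div_four hρ hρK hx.1.le hxK
      ⟨ht.trans hr.1.le, hr.2⟩)
    fun r hr ↦ (mul_le_mul_of_nonneg_left (binomTail_le_two_pow (by decide)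
      ⟨by linarith [hr.1, hx.2], hr.2⟩) hρ).trans hρη)
  simp only [hexp]
  gcongr
  exact one_add_div_sq_pow_le_exp hK
    (abs_le.2 (two_mul_div_sub_one_mem_Icc (mem_range_succ_iff.1 ha)))

open scoped Classical in
lemma inv_le_dens_isSatisfiable [NeZero n] (hd : 0 < d) (hdK : d ≤ K) {B : ℝ}
    (hB : 𝔼 ω : KSatSpace n m K, weightedCount d ω ^ 2 ≤ B) :
    B⁻¹ ≤ (({ω | IsSatisfiable ω} : Finset (KSatSpace n m K)).dens : ℝ) := by
  have hPZ := sq_expect_le_expect_sq_mul_dens (Z := weightedCount (n := n) (m := m) (K := K) d)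
    (s := {ω | IsSatisfiable ω}) fun ω hω ↦
      weightedCount_eq_zero hdK fun h ↦ hω (mem_filter.2 ⟨mem_univ ω, h⟩)
  rw [expect_weightedCount hd, one_pow] at hPZ
  have hBdens := hPZ.trans (mul_le_mul_of_nonneg_right hB (by positivity))
  have hB0 : 0 < B := pos_of_mul_pos_left (one_pos.trans_le hBdens) (by positivity)
  rwa [inv_le_iff_one_le_mul₀' hB0]

theorem tendsto_uniformMeasure_isSatisfiable (hK : 3 ≤ K) (hη : 0 < η)
    (hx : x ∈ Set.Ioo 0 1) (hxη : x + negMulLog x ≤ η) (hxK : K ^ 3 * (1 - x) ^ K ≤ 1 / 4)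
    {m : ℕ → ℕ} (hm : ∀ n, m n * 2 ^ K ≤ (log 2 - 2 * η) * binomTail 3 K 1 ^ 2 * n) :
    Tendsto (fun n ↦ uniformMeasure (KSatSpace n (m n) K) {ω | IsSatisfiable ω}) atTop (𝓝 1) := by
  classical
  obtain ⟨t, ht, hlim⟩ := exists_tendsto_laplace_bound (K ^ 3) hη
  have hdens : ∀ n, uniformMeasure (KSatSpace n (m n) K) {ω | IsSatisfiable ω}
      = ENNReal.ofReal ({ω | IsSatisfiable ω} : Finset (KSatSpace n (m n) K)).dens := fun n ↦ by
    rw [← uniformMeasure_coe_finset, coe_filter_univ]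
  simp only [hdens]
  rw [← ENNReal.ofReal_one]
  refine ENNReal.tendsto_ofReal (tendsto_of_tendsto_of_tendsto_of_le_of_le'
    (inv_one (G := ℝ) ▸ hlim.inv₀ one_ne_zero) tendsto_const_nhds ?_ ?_)
  · filter_upwards [eventually_gt_atTop 0] with n hn
    have : NeZero n := ⟨hn.ne'⟩
    exact inv_le_dens_isSatisfiable three_pos hK
      (expect_weightedCount_three_sq_le hK hη hx hxη hxK (ht n) (hm n))
  · exact Eventually.of_forall fun n ↦ by exact_mod_cast dens_le_one

lemma eventually_mul_two_pow_sq_le_mul_binomTail_one_sq (d : ℕ) {a b : ℝ} (hab : a < b) :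
    ∀ᶠ K : ℕ in atTop, a * (2 ^ K) ^ 2 ≤ b * binomTail d K 1 ^ 2 := by
  have hlim := ((tendsto_binomTail_one_div_two_pow d).pow 2).const_mul b
  rw [one_pow, mul_one] at hlim
  filter_upwards [hlim.eventually_const_le hab] with K hK
  rwa [div_pow, ← mul_div_assoc, le_div_iff₀ (by positivity)] at hK

lemma eventually_pow_mul_pow_le (p : ℕ) (hx : x ∈ Set.Ioo 0 1) {b : ℝ} (hb : 0 < b) :
    ∀ᶠ K : ℕ in atTop, K ^ p * (1 - x) ^ K ≤ b :=
  (tendsto_pow_const_mul_const_pow_of_abs_lt_one p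
    (abs_lt.2 ⟨by linarith [hx.2], by linarith [hx.1]⟩)).eventually_le_const hb

end Threshold

/-- for every `ε > 0` there is `K₀` such that for every `K ≥ K₀` and
every real `c` with `0 < c ≤ (1-ε)·2^K·log 2`, the probability that the random
`K`-SAT formula `Φ_{n,⌊cn⌋}` is satisfiable tends to `1` as `n → ∞`. -/
theorem random_ksat_sat_below_threshold (ε : ℝ) (hε : 0 < ε) :
    ∃ K₀ : ℕ, ∀ K : ℕ, K₀ ≤ K → ∀ c : ℝ,
      0 < c → c ≤ (1 - ε) * 2 ^ K * Real.log 2 →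
      Tendsto
        (fun n : ℕ =>
          uniformMeasure (KSatSpace n ⌊c * n⌋₊ K) {ω | IsSatisfiable ω})
        atTop (𝓝 1) := by
  have hlog : 0 < Real.log 2 := Real.log_pos one_lt_two
  obtain ⟨η, hη, hgap⟩ : ∃ η, 0 < η ∧ (1 - ε) * Real.log 2 < Real.log 2 - 2 * η :=
    ⟨ε * Real.log 2 / 4, by positivity, by linarith [mul_pos hε hlog]⟩
  obtain ⟨x, hx, hxη⟩ := exists_add_negMulLog_le hη
  obtain ⟨K₀, hK₀⟩ := eventually_atTop.1 <|
    (eventually_ge_atTop 3).and <|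
    (eventually_pow_mul_pow_le 3 hx (by norm_num : (0 : ℝ) < 1 / 4)).and <|
    eventually_mul_two_pow_sq_le_mul_binomTail_one_sq 3 hgap
  refine ⟨K₀, fun K hKK₀ c hc hcK ↦ ?_⟩
  obtain ⟨hK, hxK, hnorm⟩ := hK₀ K hKK₀
  refine tendsto_uniformMeasure_isSatisfiable hK hη hx hxη hxK fun n ↦ ?_
  calc (⌊c * n⌋₊ : ℝ) * 2 ^ K ≤ c * n * 2 ^ K := by
        gcongr
        exact Nat.floor_le (by positivity)
    _ ≤ (1 - ε) * 2 ^ K * Real.log 2 * n * 2 ^ K := by gcongr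
    _ = (1 - ε) * Real.log 2 * (2 ^ K) ^ 2 * n := by ring
    _ ≤ (Real.log 2 - 2 * η) * binomTail 3 K 1 ^ 2 * n := by gcongr
end

section
/- Let (X, dist) be a pseudometric space, let 0 ≤ ν₁ < ν₂ be reals, and let x₀, x₁, …, x_T be points of X such that dist(x₀, x_t) ∉ (ν₁, ν₂) for every 0 ≤ t ≤ T and dist(x₀, x_T) ≥ ν₂. Then there exists an index 0 ≤ τ < T with dist(x_τ, x_{τ+1}) ≥ ν₂ − ν₁. In particular, if dist(x_t, x_{t+1}) < ν₂ − ν₁ for all t (a 'stable' trajectory), no such sequence exists; this is the core argument showing the Overlap Gap Property obstructs stable algorithms. -/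
/-! A real sequence that avoids an open interval and ends above it after starting below it crosses
the whole interval in one step. Distance to a fixed point is 1-Lipschitz, so the trajectory itself
must move by at least the length of the interval in that step. -/

theorem exists_le_and_le_succ_of_notMem_Ioo {α : Type*} [LinearOrder α] {a b : α} (hab : a < b)
    {f : ℕ → α} {n : ℕ} (hgap : ∀ i ≤ n, f i ∉ Set.Ioo a b) (hstart : f 0 ≤ a)
    (hend : b ≤ f n) : ∃ i < n, f i ≤ a ∧ b ≤ f (i + 1) := by
  by_contra! hcross
  have hlow : ∀ i ≤ n, f i ≤ a := by
    intro i hi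
    induction i with
    | zero => exact hstart
    | succ i ih =>
      have hlt : f (i + 1) < b := hcross i hi (ih (Nat.le_of_succ_le hi))
      exact not_lt.mp fun hgt ↦ hgap (i + 1) hi ⟨hgt, hlt⟩
  exact (hab.trans_le hend).not_ge (hlow n le_rfl)

theorem ogp_obstructs_stable_trajectories_general {X : Type*} [PseudoMetricSpace X] {ν₁ ν₂ : ℝ}
    (hν : ν₁ < ν₂) {T : ℕ} {p : X} {x : ℕ → X} (hstart : dist p (x 0) ≤ ν₁)
    (hgap : ∀ t ≤ T, dist p (x t) ∉ Set.Ioo ν₁ ν₂) (hend : ν₂ ≤ dist p (x T)) :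
    ∃ τ < T, ν₂ - ν₁ ≤ dist (x τ) (x (τ + 1)) := by
  obtain ⟨τ, hτ, hlow, hhigh⟩ := exists_le_and_le_succ_of_notMem_Ioo hν hgap hstart hend
  refine ⟨τ, hτ, ?_⟩
  calc
    ν₂ - ν₁ ≤ dist p (x (τ + 1)) - dist p (x τ) := sub_le_sub hhigh hlow
    _ ≤ dist (x τ) (x (τ + 1)) := sub_le_iff_le_add'.mpr (dist_triangle p (x τ) (x (τ + 1)))

/-- the OGP obstruction to stable trajectories: in a pseudometric
space, if a sequence of points `x 0, x 1, …, x T` satisfies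
`dist (x 0) (x t) ∉ (ν₁, ν₂)` for all `t ≤ T` and `dist (x 0) (x T) ≥ ν₂`, then
some consecutive pair of points is at distance at least `ν₂ - ν₁`. -/
theorem ogp_obstructs_stable_trajectories
    {X : Type*} [PseudoMetricSpace X] (ν₁ ν₂ : ℝ) (hν₁ : 0 ≤ ν₁) (hν : ν₁ < ν₂)
    (T : ℕ) (x : ℕ → X)
    (hgap : ∀ t ≤ T, dist (x 0) (x t) ∉ Set.Ioo ν₁ ν₂)
    (hend : ν₂ ≤ dist (x 0) (x T)) :
    ∃ τ < T, ν₂ - ν₁ ≤ dist (x τ) (x (τ + 1)) :=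
  ogp_obstructs_stable_trajectories_general hν ((dist_self (x 0)).trans_le hν₁) hgap hend
end
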